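/- Let n ≥ 4 and let u : ℝⁿ \ {0} → ℝⁿ be a smooth (-1)-homogeneous vector field (λ u(λx) = u(x) for all λ > 0, x ≠ 0) for which there exists a smooth (-2)-homogeneous function p : ℝⁿ \ {0} → ℝ such that -Δu + (u·∇)u + ∇p = 0 and div u = 0 hold pointwise on ℝⁿ \ {0}. Then u ≡ 0 on ℝⁿ \ {0}. -/

import Mathlib

/-!
Write `F = x · u` for the radial part of the velocity and `H = |u|² / 2 + p` for the head pressure.
The momentum equation, Euler's identity for homogeneous functions and `div u = 0` give
`ΔF - u·∇F = -2H` and `ΔH - u·∇H = |ω|²`, where `ω` is the vorticity and `|ω|²` is the sum over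
pairs `i < j`. The `0`-homogeneous function `g = |x|² H - F² / 2 + (n - 4) F` therefore satisfies
`Δg - u·∇g = |x|² |ω|² - |∇F|²` (`HomNS.aux_eq`). By homogeneity `∇F = ω x`, and since `ω` is
antisymmetric the right-hand side is nonnegative (`antisymm_bound`). Being `0`-homogeneous, `g`
attains its maximum, so it is a constant `c` by the strong maximum principle (`strong_max`).

A vector field that is tangential to the spheres and whose divergence has a sign is divergence free
(`div_eq_zero_of_tangential`, an integration by parts). A combination of the tangential parts of
`|x|² (F u - ∇F)` and `|x|² u` has divergence `2c - (n - 3) F²`, whence `c ≥ 0`. For `n ≥ 4` this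
makes `|x|² H = c + F² / 2 - (n - 4) F` positive wherever `F < 0`, which contradicts
`ΔF - u·∇F = -2H` at a negative minimum of `F`; so `F ≥ 0` (`HomNS.radial_nonneg`). As `(n - 2) F`
is the divergence of the tangential part of `-|x|² u`, it follows that `F = 0`.

The equation for `g` now gives `ω = 0`, so the components of `u` are harmonic. Then
`Δ(|x|² |u|²) ≥ (2n - 6) |u|²`, and at a maximum of the `0`-homogeneous function `|x|² |u|²` this
forces `u = 0`.
-/

noncomputable section

/-- Partial derivative in the `j`-th coordinate direction. -/
def pd (n : ℕ) (f : (Fin n → ℝ) → ℝ) (j : Fin n) (x : Fin n → ℝ) : ℝ :=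
  fderiv ℝ f x (Pi.single j 1)

/-- Laplacian of a scalar function on `ℝⁿ`. -/
def lap (n : ℕ) (f : (Fin n → ℝ) → ℝ) (x : Fin n → ℝ) : ℝ :=
  ∑ j, pd n (pd n f j) j x

open Set Filter Topology MeasureTheory

/-! ### Calculus on the punctured space -/

/-- `f` is smooth on the punctured space `ℝⁿ \ {0}`. -/
def Sm (n : ℕ) (f : (Fin n → ℝ) → ℝ) : Prop :=
  ContDiffOn ℝ (⊤ : ℕ∞) f {x | x ≠ 0}

/-- The squared Euclidean norm on `Fin n → ℝ` (whose own norm is the sup norm). -/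
def nsq (n : ℕ) (x : Fin n → ℝ) : ℝ := ∑ i, x i ^ 2

lemma isOpen_punct (n : ℕ) : IsOpen {x : Fin n → ℝ | x ≠ 0} := isOpen_ne

namespace Sm

variable {n : ℕ} {f g : (Fin n → ℝ) → ℝ}

lemma contDiffAt (hf : Sm n f) {x : Fin n → ℝ} (hx : x ≠ 0) : ContDiffAt ℝ (⊤ : ℕ∞) f x :=
  ContDiffOn.contDiffAt hf ((isOpen_punct n).mem_nhds hx)

lemma diffAt (hf : Sm n f) {x : Fin n → ℝ} (hx : x ≠ 0) : DifferentiableAt ℝ f x :=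
  (hf.contDiffAt hx).differentiableAt (by simp)

lemma contAt (hf : Sm n f) {x : Fin n → ℝ} (hx : x ≠ 0) : ContinuousAt f x :=
  (hf.contDiffAt hx).continuousAt

lemma add (hf : Sm n f) (hg : Sm n g) : Sm n (fun x => f x + g x) := ContDiffOn.add hf hg

lemma sub (hf : Sm n f) (hg : Sm n g) : Sm n (fun x => f x - g x) := ContDiffOn.sub hf hg

lemma mul (hf : Sm n f) (hg : Sm n g) : Sm n (fun x => f x * g x) := ContDiffOn.mul hf hg

lemma const (c : ℝ) : Sm n (fun _ => c) := contDiffOn_const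

lemma coord (i : Fin n) : Sm n (fun x => x i) := (contDiff_apply ℝ ℝ i).contDiffOn

lemma sum {ι : Type*} {s : Finset ι} {F : ι → (Fin n → ℝ) → ℝ} (h : ∀ i, Sm n (F i)) :
    Sm n (fun x => ∑ i ∈ s, F i x) :=
  ContDiffOn.sum fun i _ => h i

lemma pd (hf : Sm n f) (j : Fin n) : Sm n (pd n f j) := by
  have h : ContDiffOn ℝ (⊤ : ℕ∞) (fderiv ℝ f) {x : Fin n → ℝ | x ≠ 0} :=
    ContDiffOn.fderiv_of_isOpen hf (isOpen_punct n) (by simp)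
  exact h.clm_apply contDiffOn_const

end Sm

lemma nsq_contDiff (n : ℕ) : ContDiff ℝ (⊤ : ℕ∞) (nsq n) := by
  unfold nsq
  fun_prop

lemma nsq_continuous (n : ℕ) : Continuous (nsq n) := (nsq_contDiff n).continuous

lemma sm_nsq (n : ℕ) : Sm n (nsq n) := (nsq_contDiff n).contDiffOn

lemma nsq_nonneg (n : ℕ) (x : Fin n → ℝ) : 0 ≤ nsq n x :=
  Finset.sum_nonneg fun _ _ => sq_nonneg _

lemma nsq_pos {n : ℕ} {x : Fin n → ℝ} (hx : x ≠ 0) : 0 < nsq n x := by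
  obtain ⟨i, hi⟩ := Function.ne_iff.mp hx
  exact Finset.sum_pos' (fun _ _ => sq_nonneg _) ⟨i, Finset.mem_univ _, by
    have : x i ≠ 0 := hi
    positivity⟩

section Calculus

variable {n : ℕ} {f g : (Fin n → ℝ) → ℝ} {x : Fin n → ℝ}

lemma pd_congr (h : ∀ y, y ≠ 0 → f y = g y) (hx : x ≠ 0) (j : Fin n) :
    pd n f j x = pd n g j x := by
  have : f =ᶠ[𝓝 x] g := by
    filter_upwards [(isOpen_punct n).mem_nhds hx] with y hy using h y hy
  simp only [pd, this.fderiv_eq]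

lemma pd_add (hf : Sm n f) (hg : Sm n g) (hx : x ≠ 0) (j : Fin n) :
    pd n (fun y => f y + g y) j x = pd n f j x + pd n g j x := by
  simp only [pd]
  rw [fderiv_fun_add (hf.diffAt hx) (hg.diffAt hx)]
  rfl

lemma pd_sub (hf : Sm n f) (hg : Sm n g) (hx : x ≠ 0) (j : Fin n) :
    pd n (fun y => f y - g y) j x = pd n f j x - pd n g j x := by
  simp only [pd]
  rw [fderiv_fun_sub (hf.diffAt hx) (hg.diffAt hx)]
  rfl

lemma pd_mul (hf : Sm n f) (hg : Sm n g) (hx : x ≠ 0) (j : Fin n) :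
    pd n (fun y => f y * g y) j x = f x * pd n g j x + g x * pd n f j x := by
  simp only [pd]
  rw [fderiv_fun_mul (hf.diffAt hx) (hg.diffAt hx)]
  rfl

lemma pd_const (c : ℝ) (j : Fin n) : pd n (fun _ => c) j x = 0 := by
  simp [pd]

lemma pd_const_mul (c : ℝ) (hf : Sm n f) (hx : x ≠ 0) (j : Fin n) :
    pd n (fun y => c * f y) j x = c * pd n f j x := by
  rw [pd_mul (Sm.const c) hf hx, pd_const]; ring

lemma pd_sum {ι : Type*} {s : Finset ι} {F : ι → (Fin n → ℝ) → ℝ} (h : ∀ i, Sm n (F i))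
    (hx : x ≠ 0) (j : Fin n) :
    pd n (fun y => ∑ i ∈ s, F i y) j x = ∑ i ∈ s, pd n (F i) j x := by
  simp only [pd]
  rw [fderiv_fun_sum fun i _ => (h i).diffAt hx]
  simp

lemma pd_coord (i j : Fin n) : pd n (fun y => y i) j x = if i = j then 1 else 0 := by
  have : HasFDerivAt (fun y : Fin n → ℝ => y i) (ContinuousLinearMap.proj (R := ℝ) i) x :=
    hasFDerivAt_apply i x
  simp [pd, this.fderiv, Pi.single_apply]

lemma pd_nsq (hx : x ≠ 0) (j : Fin n) : pd n (nsq n) j x = 2 * x j := by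
  have h : nsq n = fun y => ∑ i, y i * y i := by
    funext y; simp [nsq, sq]
  rw [h, pd_sum (fun i => (Sm.coord i).mul (Sm.coord i)) hx]
  simp only [pd_mul (Sm.coord _) (Sm.coord _) hx, pd_coord]
  simp [Finset.sum_add_distrib]; ring

lemma pd_comm (hf : Sm n f) (hx : x ≠ 0) (i j : Fin n) :
    pd n (pd n f i) j x = pd n (pd n f j) i x := by
  have hd : DifferentiableAt ℝ (fderiv ℝ f) x :=
    ((hf.contDiffAt hx).fderiv_right (m := 1) (by norm_cast)).differentiableAt (by simp)
  have key : ∀ a b : Fin n, pd n (pd n f a) b x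
      = fderiv ℝ (fderiv ℝ f) x (Pi.single b 1) (Pi.single a 1) := by
    intro a b
    have : pd n f a = fun y => fderiv ℝ f y (Pi.single a 1) := rfl
    rw [this]
    simp only [pd]
    rw [fderiv_clm_apply hd (differentiableAt_const _)]
    simp
  rw [key, key]
  exact ((hf.contDiffAt hx).isSymmSndFDerivAt (by simp; norm_cast)) _ _

lemma lap_congr (h : ∀ y, y ≠ 0 → f y = g y) (hx : x ≠ 0) : lap n f x = lap n g x :=
  Finset.sum_congr rfl fun j _ => pd_congr (fun _ hy => pd_congr h hy j) hx j

lemma lap_add (hf : Sm n f) (hg : Sm n g) (hx : x ≠ 0) :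
    lap n (fun y => f y + g y) x = lap n f x + lap n g x := by
  simp only [lap, ← Finset.sum_add_distrib]
  refine Finset.sum_congr rfl fun j _ => ?_
  rw [← pd_add (hf.pd j) (hg.pd j) hx]
  exact pd_congr (fun y hy => pd_add hf hg hy j) hx j

lemma lap_const_mul (c : ℝ) (hf : Sm n f) (hx : x ≠ 0) :
    lap n (fun y => c * f y) x = c * lap n f x := by
  simp only [lap, Finset.mul_sum]
  refine Finset.sum_congr rfl fun j _ => ?_
  rw [← pd_const_mul c (hf.pd j) hx]
  exact pd_congr (fun y hy => pd_const_mul c hf hy j) hx j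

lemma lap_sum {ι : Type*} {s : Finset ι} {F : ι → (Fin n → ℝ) → ℝ} (h : ∀ i, Sm n (F i))
    (hx : x ≠ 0) : lap n (fun y => ∑ i ∈ s, F i y) x = ∑ i ∈ s, lap n (F i) x := by
  simp only [lap]
  rw [Finset.sum_comm]
  refine Finset.sum_congr rfl fun j _ => ?_
  rw [← pd_sum (fun i => (h i).pd j) hx]
  exact pd_congr (fun y hy => pd_sum h hy j) hx j

lemma lap_mul (hf : Sm n f) (hg : Sm n g) (hx : x ≠ 0) :
    lap n (fun y => f y * g y) x
      = f x * lap n g x + 2 * (∑ j, pd n f j x * pd n g j x) + g x * lap n f x := by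
  simp only [lap, Finset.mul_sum, ← Finset.sum_add_distrib]
  refine Finset.sum_congr rfl fun j _ => ?_
  rw [pd_congr (fun y hy => pd_mul hf hg hy j) hx j,
    pd_add (hf.mul (hg.pd j)) (hg.mul (hf.pd j)) hx, pd_mul hf (hg.pd j) hx,
    pd_mul hg (hf.pd j) hx]
  ring

lemma lap_coord (hx : x ≠ 0) (i : Fin n) : lap n (fun y => y i) x = 0 := by
  refine Finset.sum_eq_zero fun j _ => ?_
  rw [pd_congr (g := fun _ => if i = j then 1 else 0) (fun y _ => pd_coord i j) hx j, pd_const]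

lemma lap_nsq (hx : x ≠ 0) : lap n (nsq n) x = 2 * n := by
  have : ∀ j, pd n (pd n (nsq n) j) j x = 2 := fun j => by
    rw [pd_congr (g := fun y => 2 * y j) (fun y hy => pd_nsq hy j) hx j,
      pd_const_mul 2 (Sm.coord j) hx, pd_coord]
    simp
  simp [lap, this]; ring

lemma fderiv_eq_sum_pd (v : Fin n → ℝ) : fderiv ℝ f x v = ∑ j, v j * pd n f j x := by
  conv_lhs => rw [pi_eq_sum_univ' v]
  simp [pd, map_sum]

/-- Euler's identity for a function that is homogeneous of degree `-k`. -/
lemma euler (k : ℕ) (hf : Sm n f) (hx : x ≠ 0)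
    (h : ∀ l : ℝ, 0 < l → l ^ k * f (l • x) = f x) :
    ∑ j, x j * pd n f j x = -k * f x := by
  rw [← fderiv_eq_sum_pd]
  have h1 : HasDerivAt (fun l : ℝ => l • x) x 1 := by
    simpa using (hasDerivAt_id (1 : ℝ)).smul_const x
  have h2 : HasDerivAt (fun l : ℝ => f (l • x)) (fderiv ℝ f x x) 1 := by
    have : HasFDerivAt f (fderiv ℝ f x) ((1 : ℝ) • x) := by
      rw [one_smul]; exact (hf.diffAt hx).hasFDerivAt
    exact HasFDerivAt.comp_hasDerivAt (1 : ℝ) this h1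
  have h3 := (hasDerivAt_pow k (1 : ℝ)).mul h2
  have h4 : (fun l : ℝ => l ^ k * f (l • x)) =ᶠ[𝓝 1] fun _ => f x := by
    filter_upwards [lt_mem_nhds (one_pos : (0 : ℝ) < 1)] with l hl using h l hl
  have h5 := (h3.congr_of_eventuallyEq h4.symm).unique (hasDerivAt_const _ _)
  simp at h5
  linarith

end Calculus

/-! ### Maximum principles -/

section MaxPrinciple

variable {n : ℕ} {f g : (Fin n → ℝ) → ℝ} {x : Fin n → ℝ}

lemma hasDerivAt_line (hf : Sm n f) (j : Fin n) {t : ℝ}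
    (ht : x + t • (Pi.single j 1 : Fin n → ℝ) ≠ 0) :
    HasDerivAt (fun s : ℝ => f (x + s • (Pi.single j 1 : Fin n → ℝ)))
      (pd n f j (x + t • (Pi.single j 1 : Fin n → ℝ))) t := by
  have h1 : HasDerivAt (fun s : ℝ => x + s • (Pi.single j 1 : Fin n → ℝ)) (Pi.single j 1) t := by
    simpa using ((hasDerivAt_id t).smul_const (Pi.single j 1 : Fin n → ℝ)).const_add x
  exact (hf.diffAt ht).hasFDerivAt.comp_hasDerivAt t h1

lemma pd_eq_zero_of_isLocalMax (hm : IsLocalMax f x) (j : Fin n) : pd n f j x = 0 := by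
  simp [pd, hm.fderiv_eq_zero]

lemma pd_pd_nonpos_of_isLocalMax (hf : Sm n f) (hx : x ≠ 0) (hm : IsLocalMax f x) (j : Fin n) :
    pd n (pd n f j) j x ≤ 0 := by
  by_contra! hpos
  set L : ℝ → Fin n → ℝ := fun s => x + s • (Pi.single j 1 : Fin n → ℝ) with hL
  have hL0 : L 0 = x := by simp [hL]
  have hLc : Continuous L := by fun_prop
  have hLt : Tendsto L (𝓝 0) (𝓝 x) := by simpa [hL0] using hLc.tendsto 0
  have hne : ∀ᶠ t in 𝓝 (0 : ℝ), L t ≠ 0 := hLt ((isOpen_punct n).mem_nhds hx)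
  have hd1 : deriv (fun s => f (L s)) =ᶠ[𝓝 0] fun s => pd n f j (L s) := by
    filter_upwards [hne] with t ht using (hasDerivAt_line hf j ht).deriv
  have hd2 : deriv (deriv fun s => f (L s)) 0 = pd n (pd n f j) j x := by
    rw [hd1.deriv_eq]
    have := (hasDerivAt_line (x := x) (t := 0) (hf.pd j) j (by simpa using hx)).deriv
    simpa [hL] using this
  have hmax : IsLocalMax (fun s => f (L s)) 0 := by
    have := hLt.eventually hm
    simpa [IsLocalMax, IsMaxFilter, hL0] using this
  have hmin : IsLocalMin (fun s => f (L s)) 0 := by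
    refine isLocalMin_of_deriv_deriv_pos (by rw [hd2]; exact hpos) hmax.deriv_eq_zero ?_
    exact ((hf.contAt hx).comp_of_eq hLc.continuousAt hL0)
  -- a local maximum that is also a local minimum: the restriction to the line is constant near `0`
  have hconst : (fun s => f (L s)) =ᶠ[𝓝 0] fun _ => f (L 0) := by
    filter_upwards [hmax, hmin] with t h1 h2 using le_antisymm h1 h2
  have h0 : deriv (fun s => f (L s)) =ᶠ[𝓝 0] fun _ => 0 := by
    have := hconst.deriv
    simpa using this
  rw [h0.deriv_eq] at hd2
  simp at hd2
  linarith

lemma lap_nonpos_of_isLocalMax (hf : Sm n f) (hx : x ≠ 0) (hm : IsLocalMax f x) :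
    lap n f x ≤ 0 :=
  Finset.sum_nonpos fun j _ => pd_pd_nonpos_of_isLocalMax hf hx hm j

/-- A `0`-homogeneous function attains its maximum, because the unit sphere is compact. -/
lemma exists_max_of_homog (hn : 0 < n) (hf : Sm n f)
    (h : ∀ l : ℝ, 0 < l → ∀ x, x ≠ 0 → f (l • x) = f x) :
    ∃ z, z ≠ 0 ∧ ∀ y, y ≠ 0 → f y ≤ f z := by
  have : Nonempty (Fin n) := ⟨⟨0, hn⟩⟩
  have hne : ∀ y ∈ Metric.sphere (0 : Fin n → ℝ) 1, y ≠ 0 := by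
    rintro y hy rfl
    simp at hy
  obtain ⟨z, hz, hmax⟩ := (isCompact_sphere (0 : Fin n → ℝ) 1).exists_isMaxOn
    (NormedSpace.sphere_nonempty.mpr zero_le_one)
    (fun y hy => (hf.contAt (hne y hy)).continuousWithinAt)
  refine ⟨z, hne z hz, fun y hy => ?_⟩
  have hy' : 0 < ‖y‖⁻¹ := by positivity
  rw [← h _ hy' y hy]
  exact hmax (by simp [norm_smul, hy])

/-- The barrier `exp (-α |x - y|²)` used in Hopf's argument. -/
def barrier (n : ℕ) (α : ℝ) (y : Fin n → ℝ) (x : Fin n → ℝ) : ℝ :=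
  Real.exp (-α * nsq n (x - y))

lemma barrier_contDiff (α : ℝ) (y : Fin n → ℝ) : ContDiff ℝ (⊤ : ℕ∞) (barrier n α y) := by
  unfold barrier nsq
  fun_prop

lemma sm_barrier (α : ℝ) (y : Fin n → ℝ) : Sm n (barrier n α y) :=
  (barrier_contDiff α y).contDiffOn

lemma pd_barrier (α : ℝ) (y : Fin n → ℝ) (x : Fin n → ℝ) (j : Fin n) :
    pd n (barrier n α y) j x = -2 * α * (x j - y j) * barrier n α y x := by
  have h0 : HasFDerivAt (fun x : Fin n → ℝ => nsq n (x - y))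
      (∑ i, (2 * (x i - y i)) • ContinuousLinearMap.proj (R := ℝ) (φ := fun _ : Fin n => ℝ) i) x := by
    unfold nsq
    refine HasFDerivAt.fun_sum fun i _ => ?_
    have := ((hasFDerivAt_apply (𝕜 := ℝ) i x).sub_const (y i)).pow 2
    simpa using this
  have h1 := (h0.const_mul (-α)).exp
  have h2 : fderiv ℝ (barrier n α y) x = _ := h1.fderiv
  simp only [pd, h2]
  simp [Pi.single_apply, barrier]
  ring

lemma lap_barrier (α : ℝ) (y : Fin n → ℝ) (hx : x ≠ 0) :
    lap n (barrier n α y) x = (4 * α ^ 2 * nsq n (x - y) - 2 * α * n) * barrier n α y x := by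
  have h : ∀ j, pd n (pd n (barrier n α y) j) j x
      = (4 * α ^ 2 * (x j - y j) ^ 2 - 2 * α) * barrier n α y x := fun j => by
    have hl : Sm n (fun z => z j - y j) := (Sm.coord j).sub (Sm.const _)
    rw [pd_congr (g := fun z => (-2 * α) * ((z j - y j) * barrier n α y z))
        (fun z _ => by rw [pd_barrier]; ring) hx j,
      pd_const_mul _ (hl.mul (sm_barrier α y)) hx, pd_mul hl (sm_barrier α y) hx, pd_barrier,
      pd_sub (Sm.coord j) (Sm.const _) hx, pd_coord, pd_const]
    simp only [if_true]
    ring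
  simp only [lap, h, ← Finset.sum_mul, Finset.sum_sub_distrib, ← Finset.mul_sum, nsq]
  simp
  left; ring

end MaxPrinciple

/-! ### The strong maximum principle -/

section Hopf

variable {n : ℕ} {f : (Fin n → ℝ) → ℝ}

/-- Hopf's argument: a subsolution `f ≤ f z` cannot touch its maximum at the boundary point `z` of
a Euclidean ball around `c` on which `f < f z` elsewhere. Adding a small multiple of the barrier
centred at `c` would produce an interior maximum of a strict subsolution near `z`. -/
lemma hopf_touch (hf : Sm n f) (b : (Fin n → ℝ) → Fin n → ℝ)
    (hb : ∀ j, Sm n (fun x => b x j))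
    (hL : ∀ x, x ≠ 0 → ∑ j, b x j * pd n f j x ≤ lap n f x)
    {z c : Fin n → ℝ} (hz : z ≠ 0) (hmax : ∀ y, y ≠ 0 → f y ≤ f z) (hzc : z ≠ c)
    (hball : ∀ x, x ≠ 0 → x ≠ z → nsq n (x - c) ≤ nsq n (z - c) → f x < f z) : False := by
  obtain ⟨ρ, hρ, hρz, hρc⟩ : ∃ ρ : ℝ, 0 < ρ ∧ ρ < ‖z‖ ∧ ρ < ‖z - c‖ := by
    have h1 : 0 < ‖z‖ := norm_pos_iff.mpr hz
    have h2 : 0 < ‖z - c‖ := norm_pos_iff.mpr (sub_ne_zero.mpr hzc)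
    obtain ⟨ρ, h3, h4⟩ := exists_between (lt_min h1 h2)
    exact ⟨ρ, h3, h4.trans_le (min_le_left _ _), h4.trans_le (min_le_right _ _)⟩
  set K := Metric.closedBall z ρ with hK
  have hKc : IsCompact K := isCompact_closedBall z ρ
  have hK0 : ∀ x ∈ K, x ≠ 0 := by
    rintro x hx rfl
    rw [hK, Metric.mem_closedBall, dist_zero_left] at hx
    linarith
  have hKs : ∀ x ∈ K, 0 < nsq n (x - c) := by
    intro x hx
    refine nsq_pos (sub_ne_zero.mpr ?_)
    rintro rfl
    rw [hK, Metric.mem_closedBall, dist_comm, dist_eq_norm] at hx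
    linarith
  -- a steepness of the barrier that makes it a strict subsolution on `K`
  obtain ⟨α, hα, hαK⟩ : ∃ α : ℝ, 0 < α ∧ ∀ x ∈ K,
      2 * n - 2 * (∑ j, b x j * (x j - c j)) < 4 * α * nsq n (x - c) := by
    have hq : ContinuousOn
        (fun x => (2 * n - 2 * (∑ j, b x j * (x j - c j))) / (4 * nsq n (x - c))) K := by
      intro x hx
      have h1 : ContinuousAt (fun x => ∑ j, b x j * (x j - c j)) x := by
        have : Sm n (fun x => ∑ j, b x j * (x j - c j)) :=
          Sm.sum fun j => (hb j).mul ((Sm.coord j).sub (Sm.const _))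
        exact this.contAt (hK0 x hx)
      have h2 : ContinuousAt (fun x => nsq n (x - c)) x :=
        ((nsq_continuous n).comp (continuous_id.sub continuous_const)).continuousAt
      refine ContinuousAt.continuousWithinAt (ContinuousAt.div ?_ ?_ ?_)
      · exact continuousAt_const.sub (continuousAt_const.mul h1)
      · exact continuousAt_const.mul h2
      · have := hKs x hx
        positivity
    obtain ⟨C, hC⟩ := hKc.exists_bound_of_continuousOn hq
    refine ⟨|C| + 1, by positivity, fun x hx => ?_⟩
    have h1 := (le_abs_self _).trans ((hC x hx).trans (le_abs_self C))
    have hs := hKs x hx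
    rw [div_le_iff₀ (by positivity)] at h1
    nlinarith
  obtain ⟨M', hM', hT⟩ : ∃ M', M' < f z ∧
      ∀ x ∈ Metric.sphere z ρ ∩ {x | nsq n (x - c) ≤ nsq n (z - c)}, f x ≤ M' := by
    have hTc : IsCompact (Metric.sphere z ρ ∩ {x | nsq n (x - c) ≤ nsq n (z - c)}) := by
      refine (isCompact_sphere z ρ).inter_right (isClosed_le ?_ continuous_const)
      exact (nsq_continuous n).comp (continuous_id.sub continuous_const)
    obtain ⟨a, ha, hTa⟩ := hTc.exists_forall_le' (f := fun x => -f x) (a := -f z) (by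
      intro x hx
      exact (hf.contAt (hK0 x (Metric.sphere_subset_closedBall hx.1))).neg.continuousWithinAt) (by
      intro x hx
      refine neg_lt_neg (hball x (hK0 x (Metric.sphere_subset_closedBall hx.1)) ?_ hx.2)
      rintro rfl
      have := hx.1
      simp at this
      linarith)
    exact ⟨-a, by linarith, fun x hx => by linarith [hTa x hx]⟩
  set ε := f z - M' with hε
  have hεpos : 0 < ε := by linarith
  set w := barrier n α c with hw
  have hwS : Sm n w := sm_barrier α c
  have hwpos : ∀ x, 0 < w x := fun x => Real.exp_pos _
  set Φ : (Fin n → ℝ) → ℝ := fun x => f x + ε * w x with hΦ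
  have hεw : Sm n (fun x => ε * w x) := (Sm.const ε).mul hwS
  have hΦS : Sm n Φ := hf.add hεw
  have hbd : ∀ x ∈ Metric.sphere z ρ, Φ x ≤ Φ z := by
    intro x hx
    have hx0 := hK0 x (Metric.sphere_subset_closedBall hx)
    rcases le_or_gt (nsq n (x - c)) (nsq n (z - c)) with h | h
    · have h1 := hT x ⟨hx, h⟩
      have h2 : w x ≤ 1 := by
        rw [hw, barrier, Real.exp_le_one_iff]
        have := nsq_nonneg n (x - c)
        nlinarith
      have h3 := mul_pos hεpos (hwpos z)
      have h4 : ε * w x ≤ ε := by nlinarith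
      simp only [hΦ]
      linarith
    · have h1 := hmax x hx0
      have h2 : w x ≤ w z := by
        rw [hw, barrier, barrier, Real.exp_le_exp]
        nlinarith
      simp only [hΦ]
      nlinarith
  obtain ⟨y, hyb, hy⟩ : ∃ y ∈ Metric.ball z ρ, ∀ x ∈ K, Φ x ≤ Φ y := by
    obtain ⟨y, hyK, hy⟩ := hKc.exists_isMaxOn ⟨z, Metric.mem_closedBall_self hρ.le⟩
      (f := Φ) (fun x hx => (hΦS.contAt (hK0 x hx)).continuousWithinAt)
    rcases (Metric.mem_closedBall.mp hyK).lt_or_eq with h | h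
    · exact ⟨y, h, fun x hx => hy hx⟩
    · exact ⟨z, Metric.mem_ball_self hρ, fun x hx => (hy hx).trans (hbd y h)⟩
  have hyK : y ∈ K := Metric.ball_subset_closedBall hyb
  have hy0 := hK0 y hyK
  have hloc : IsLocalMax Φ y := by
    filter_upwards [Metric.isOpen_ball.mem_nhds hyb] with x hx
      using hy x (Metric.ball_subset_closedBall hx)
  have hlap := lap_nonpos_of_isLocalMax hΦS hy0 hloc
  have hpd : ∀ j, pd n f j y = 2 * ε * α * w y * (y j - c j) := by
    intro j
    have h1 := pd_eq_zero_of_isLocalMax hloc j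
    rw [hΦ, pd_add hf hεw hy0, pd_const_mul ε hwS hy0, hw, pd_barrier] at h1
    rw [hw]
    linarith
  rw [hΦ, lap_add hf hεw hy0, lap_const_mul ε hwS hy0, hw, lap_barrier α c hy0, ← hw] at hlap
  have h1 := hL y hy0
  have h2 : ∑ j, b y j * pd n f j y = 2 * ε * α * w y * ∑ j, b y j * (y j - c j) := by
    rw [Finset.mul_sum]
    refine Finset.sum_congr rfl fun j _ => ?_
    rw [hpd]; ring
  have h3 := hαK y hyK
  have h4 : 0 < ε * α * w y := mul_pos (mul_pos hεpos hα) (hwpos y)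
  nlinarith [mul_pos h4 (sub_pos.mpr h3)]

/-- The strong maximum principle on the punctured space: a subsolution of `Δ - b·∇` attaining its
maximum is constant. -/
theorem strong_max (hn : 2 ≤ n) (hf : Sm n f) (b : (Fin n → ℝ) → Fin n → ℝ)
    (hb : ∀ j, Sm n (fun x => b x j))
    (hL : ∀ x, x ≠ 0 → ∑ j, b x j * pd n f j x ≤ lap n f x)
    {z : Fin n → ℝ} (hz : z ≠ 0) (hmax : ∀ y, y ≠ 0 → f y ≤ f z) :
    ∀ y, y ≠ 0 → f y = f z := by
  have hpre : IsPreconnected {x : Fin n → ℝ | x ≠ 0} := by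
    refine (isConnected_compl_singleton_of_one_lt_rank ?_ (0 : Fin n → ℝ)).isPreconnected
    rw [rank_fin_fun]
    exact_mod_cast hn
  have hU : IsOpen {x : Fin n → ℝ | x ≠ 0 ∧ f x < f z} := by
    rw [isOpen_iff_mem_nhds]
    rintro x ⟨hx, hlt⟩
    filter_upwards [(isOpen_punct n).mem_nhds hx, (hf.contAt hx).eventually_lt_const hlt] with y h1 h2
    exact ⟨h1, h2⟩
  have hZ : IsOpen {x : Fin n → ℝ | x ≠ 0 ∧ f x = f z} := by
    rw [isOpen_iff_mem_nhds]
    rintro z₀ ⟨hz₀, hfz₀⟩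
    by_contra hnot
    -- points `y` with `f y < f z` exist arbitrarily close to `z₀`
    have hev : ∀ᶠ y in 𝓝 z₀, 2 * nsq n (z₀ - y) < nsq n y := by
      have h1 : Continuous fun y => 2 * nsq n (z₀ - y) :=
        continuous_const.mul ((nsq_continuous n).comp (continuous_const.sub continuous_id))
      refine (h1.continuousAt (x := z₀)).eventually_lt (nsq_continuous n).continuousAt ?_
      have := nsq_pos hz₀
      simpa [nsq] using this
    have hfr : ∃ᶠ y in 𝓝 z₀, ¬ (y ≠ 0 ∧ f y = f z) := fun h => hnot (by
      filter_upwards [h] with y hy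
      exact not_not.mp hy)
    obtain ⟨y, hyn, hyd, hy0⟩ :=
      (hfr.and_eventually (hev.and ((isOpen_punct n).mem_nhds hz₀))).exists
    have hyne : f y ≠ f z := fun h => hyn ⟨hy0, h⟩
    have hcl : IsClosed ({x : Fin n → ℝ | x ≠ 0 ∧ f x < f z}ᶜ) := hU.isClosed_compl
    have hdc : Continuous fun x : Fin n → ℝ => nsq n (x - y) :=
      (nsq_continuous n).comp (continuous_id.sub continuous_const)
    -- the point `z₁` of the contact set that is nearest to `y`
    obtain ⟨z₁, hz₁, hnear⟩ : ∃ z₁ ∈ {x : Fin n → ℝ | x ≠ 0 ∧ f x < f z}ᶜ,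
        ∀ x ∈ {x : Fin n → ℝ | x ≠ 0 ∧ f x < f z}ᶜ, nsq n (z₁ - y) ≤ nsq n (x - y) := by
      have hmem : z₀ ∈ {x : Fin n → ℝ | x ≠ 0 ∧ f x < f z}ᶜ := fun h => h.2.ne hfz₀
      obtain ⟨z₁, h1, h2⟩ := hdc.continuousOn.exists_isMinOn' hcl hmem (by
        have hcpt := isCompact_closedBall y (Real.sqrt (nsq n (z₀ - y)))
        refine Filter.mem_inf_of_left ?_
        filter_upwards [hcpt.compl_mem_cocompact] with x hx
        by_contra! hlt
        apply hx
        rw [Metric.mem_closedBall, dist_eq_norm, pi_norm_le_iff_of_nonneg (Real.sqrt_nonneg _)]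
        intro i
        rw [Real.norm_eq_abs]
        refine Real.abs_le_sqrt (le_trans ?_ hlt.le)
        exact Finset.single_le_sum (f := fun i => (x - y) i ^ 2) (fun i _ => sq_nonneg _)
          (Finset.mem_univ i))
      exact ⟨z₁, h1, fun x hx => h2 hx⟩
    have hzz : nsq n (z₁ - y) ≤ nsq n (z₀ - y) := hnear z₀ fun h => h.2.ne hfz₀
    have hz₁0 : z₁ ≠ 0 := by
      rintro rfl
      have h1 := nsq_nonneg n (z₀ - y)
      have h2 : nsq n (0 - y) = nsq n y := by simp [nsq]
      linarith
    have hfz₁ : f z₁ = f z := by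
      by_contra h
      exact hz₁ ⟨hz₁0, lt_of_le_of_ne (hmax _ hz₁0) h⟩
    have hz₁y : z₁ ≠ y := fun h => hyne (h ▸ hfz₁)
    -- halving the ball around `y` leaves `z₁` as the only contact point
    set c : Fin n → ℝ := (1 / 2 : ℝ) • (z₁ + y) with hc
    have hpar : ∀ x, nsq n (x - y) + nsq n (x - z₁) = 2 * nsq n (x - c) + 2 * nsq n (z₁ - c) := by
      intro x
      simp only [nsq, Finset.mul_sum, ← Finset.sum_add_distrib]
      refine Finset.sum_congr rfl fun i _ => ?_
      simp [hc]; ring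
    have hzc : nsq n (z₁ - y) = 4 * nsq n (z₁ - c) := by
      have := hpar z₁
      have h0 : nsq n (z₁ - z₁) = 0 := by simp [nsq]
      linarith
    refine hopf_touch hf b hb hL (z := z₁) (c := c) hz₁0 (fun x hx => by
      rw [hfz₁]; exact hmax x hx) ?_ ?_
    · intro h
      have h1 := nsq_pos (sub_ne_zero.mpr hz₁y)
      have h2 : nsq n (z₁ - c) = 0 := by rw [← h]; simp [nsq]
      linarith
    · intro x hx hxz hle
      rw [hfz₁]
      by_contra hnl
      have h1 := hnear x fun h => hnl h.2
      have h2 := nsq_pos (sub_ne_zero.mpr hxz)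
      have := hpar x
      linarith
  have hsub := hpre.subset_left_of_subset_union hZ hU
    (by
      rw [Set.disjoint_left]
      rintro x ⟨_, h1⟩ ⟨_, h2⟩
      exact h2.ne h1)
    (by
      intro x hx
      rcases (hmax x hx).lt_or_eq with h | h
      · exact Or.inr ⟨hx, h⟩
      · exact Or.inl ⟨hx, h⟩)
    ⟨z, hz, hz, rfl⟩
  exact fun y hy => (hsub hy).2

end Hopf

/-! ### Tangential vector fields -/

/-- A vector field tangential to the spheres whose divergence has a sign is divergence free: test
the divergence against a radial bump function, whose gradient is orthogonal to the field. -/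
theorem div_eq_zero_of_tangential {n : ℕ} {W : Fin n → (Fin n → ℝ) → ℝ}
    (hW : ∀ i, Sm n (W i)) (htan : ∀ x, x ≠ 0 → ∑ i, x i * W i x = 0)
    (hdiv : ∀ x, x ≠ 0 → 0 ≤ ∑ i, pd n (W i) i x) :
    ∀ x, x ≠ 0 → ∑ i, pd n (W i) i x = 0 := by
  intro x₀ hx₀
  have hs := nsq_pos hx₀
  set s := nsq n x₀ with hs_def
  let β : ContDiffBump s := ⟨s / 4, s / 2, by positivity, by linarith⟩
  set ψ : (Fin n → ℝ) → ℝ := fun x => β (nsq n x) with hψ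
  have hψs : ContDiff ℝ (⊤ : ℕ∞) ψ := β.contDiff.comp (nsq_contDiff n)
  have hψd : Differentiable ℝ ψ := hψs.differentiable (by simp)
  set C : Set (Fin n → ℝ) := {x | s / 2 ≤ nsq n x} ∩ {x | nsq n x ≤ 3 * s / 2} with hC
  have hCclosed : IsClosed C :=
    (isClosed_le continuous_const (nsq_continuous n)).inter
      (isClosed_le (nsq_continuous n) continuous_const)
  have hsupp : tsupport ψ ⊆ C := by
    refine closure_minimal (fun x hx => ?_) hCclosed
    have h1 : nsq n x ∈ Function.support β := hx
    rw [β.support_eq, Metric.mem_ball, Real.dist_eq] at h1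
    obtain ⟨h2, h3⟩ := abs_lt.mp h1
    have : β.rOut = s / 2 := rfl
    constructor <;> simp only [mem_ofPred_eq] <;> linarith
  have hCK : IsCompact C := by
    refine (isCompact_closedBall (0 : Fin n → ℝ) (Real.sqrt (3 * s / 2))).of_isClosed_subset
      hCclosed fun x hx => ?_
    rw [Metric.mem_closedBall, dist_zero_right, pi_norm_le_iff_of_nonneg (Real.sqrt_nonneg _)]
    intro i
    rw [Real.norm_eq_abs]
    refine Real.abs_le_sqrt (le_trans ?_ hx.2)
    exact Finset.single_le_sum (f := fun i => x i ^ 2) (fun i _ => sq_nonneg _)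
      (Finset.mem_univ i)
  have hψK : HasCompactSupport ψ := hCK.of_isClosed_subset (isClosed_tsupport ψ) hsupp
  have hne : ∀ x ∈ tsupport ψ, x ≠ 0 := by
    rintro x hx rfl
    have := (hsupp hx).1
    simp [nsq] at this
    linarith
  have hcont : ∀ (φ : (Fin n → ℝ) → ℝ) (h : (Fin n → ℝ) → ℝ), Continuous φ →
      tsupport φ ⊆ tsupport ψ → Sm n h → Continuous fun x => φ x * h x := by
    intro φ h hφ hsub hh
    refine continuous_of_tsupport fun x hx => ?_
    have hx' : x ≠ 0 := hne x (hsub (tsupport_mul_subset_left hx))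
    exact hφ.continuousAt.mul (hh.contAt hx')
  have hdsub : ∀ i : Fin n, tsupport (fun x => fderiv ℝ ψ x (Pi.single i 1)) ⊆ tsupport ψ := by
    intro i
    refine (closure_mono fun x hx => ?_).trans (tsupport_fderiv_subset ℝ (f := ψ))
    intro h
    exact hx (by simp [h])
  have hdcont : ∀ i : Fin n, Continuous (fun x => fderiv ℝ ψ x (Pi.single i 1)) := fun i =>
    (hψs.continuous_fderiv (by simp)).clm_apply continuous_const
  have hint : ∀ (φ : (Fin n → ℝ) → ℝ) (h : (Fin n → ℝ) → ℝ), Continuous φ →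
      tsupport φ ⊆ tsupport ψ → Sm n h → Integrable fun x => φ x * h x := by
    intro φ h hφ hsub hh
    refine (hcont φ h hφ hsub hh).integrable_of_hasCompactSupport ?_
    have hφK : HasCompactSupport φ := hψK.of_isClosed_subset (isClosed_tsupport φ) hsub
    exact HasCompactSupport.mul_right hφK
  have hibp : ∀ i : Fin n, ∫ x, ψ x * pd n (W i) i x
      = -∫ x, fderiv ℝ ψ x (Pi.single i 1) * W i x := fun i =>
    integral_mul_fderiv_eq_neg_fderiv_mul_of_integrable
      (hint _ _ (hdcont i) (hdsub i) (hW i))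
      (hint _ _ hψs.continuous subset_rfl ((hW i).pd i))
      (hint _ _ hψs.continuous subset_rfl (hW i))
      (fun x _ => hψd x) (fun x hx => (hW i).diffAt (hne x hx))
  have horth : ∀ x, ∑ i, fderiv ℝ ψ x (Pi.single i 1) * W i x = 0 := by
    intro x
    by_cases hx : x ∈ tsupport ψ
    · have hx0 := hne x hx
      have h1 : HasFDerivAt ψ (deriv β (nsq n x) • fderiv ℝ (nsq n) x) x :=
        ((β.contDiff (n := 1)).differentiable (by simp) _).hasDerivAt.comp_hasFDerivAt x
          ((sm_nsq n).diffAt hx0).hasFDerivAt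
      have h2 : ∀ i, fderiv ℝ (nsq n) x (Pi.single i 1) = 2 * x i := fun i => pd_nsq hx0 i
      rw [h1.fderiv]
      simp only [_root_.smul_apply, h2, smul_eq_mul]
      have h3 := htan x hx0
      calc ∑ i, deriv β (nsq n x) * (2 * x i) * W i x
          = 2 * deriv β (nsq n x) * ∑ i, x i * W i x := by
            rw [Finset.mul_sum]
            exact Finset.sum_congr rfl fun i _ => by ring
        _ = 0 := by rw [h3, mul_zero]
    · simp [fderiv_of_notMem_tsupport ℝ hx]
  have hzero : ∫ x, ψ x * ∑ i, pd n (W i) i x = 0 := by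
    simp only [Finset.mul_sum]
    rw [integral_finsetSum _ fun i _ => hint _ _ hψs.continuous subset_rfl ((hW i).pd i)]
    simp only [hibp]
    rw [Finset.sum_neg_distrib,
      ← integral_finsetSum _ fun i _ => hint _ _ (hdcont i) (hdsub i) (hW i)]
    simp [horth]
  have hdS : Sm n fun x => ∑ i, pd n (W i) i x := Sm.sum fun i => (hW i).pd i
  have hnonneg : 0 ≤ fun x => ψ x * ∑ i, pd n (W i) i x := by
    intro x
    by_cases hx : x ∈ tsupport ψ
    · exact mul_nonneg β.nonneg (hdiv x (hne x hx))
    · simp [image_eq_zero_of_notMem_tsupport hx]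
  have hae := (integral_eq_zero_iff_of_nonneg hnonneg
    (hint _ _ hψs.continuous subset_rfl hdS)).mp hzero
  have heq := (Continuous.ae_eq_iff_eq volume
    (hcont _ _ hψs.continuous subset_rfl hdS) continuous_const).mp hae
  have h1 : ψ x₀ * ∑ i, pd n (W i) i x₀ = 0 := congrFun heq x₀
  have h2 : ψ x₀ = 1 := β.one_of_mem_closedBall (by
    rw [← hs_def]
    exact Metric.mem_closedBall_self β.rIn_pos.le)
  rwa [h2, one_mul] at h1

/-! ### Identities for homogeneous solutions -/

/-- For antisymmetric `ω`, the operator norm is at most `2^(-1/2)` times the Frobenius norm. -/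
lemma antisymm_bound {n : ℕ} (ω : Fin n → Fin n → ℝ) (hω : ∀ i j, ω i j = -ω j i)
    (x : Fin n → ℝ) (hx : x ≠ 0) :
    2 * ∑ i, (∑ j, ω i j * x j) ^ 2 ≤ nsq n x * ∑ i, ∑ j, ω i j ^ 2 := by
  set a : Fin n → ℝ := fun i => ∑ j, ω i j * x j with ha
  set s := nsq n x with hs
  have hspos : 0 < s := nsq_pos hx
  have hs' : ∑ j, x j ^ 2 = s := rfl
  have e1 : ∑ i, ∑ j, a i ^ 2 * x j ^ 2 = (∑ i, a i ^ 2) * s := by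
    rw [← hs', Finset.sum_mul_sum]
  have e2 : ∑ i, ∑ j, a j ^ 2 * x i ^ 2 = (∑ i, a i ^ 2) * s := by
    rw [Finset.sum_comm, e1]
  have e3 : ∑ i, ∑ j, ω i j * x j * a i = ∑ i, a i ^ 2 := by
    refine Finset.sum_congr rfl fun i _ => ?_
    rw [← Finset.sum_mul, sq]
  have e4 : ∑ i, ∑ j, ω i j * x i * a j = -∑ i, a i ^ 2 := by
    rw [Finset.sum_comm, ← e3, ← Finset.sum_neg_distrib]
    refine Finset.sum_congr rfl fun i _ => ?_
    rw [← Finset.sum_neg_distrib]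
    refine Finset.sum_congr rfl fun j _ => ?_
    rw [hω j i]; ring
  have e5 : ∑ i, ∑ j, (a i * x i) * (a j * x j) = 0 := by
    have h0 : ∑ i, a i * x i = 0 := by
      have h1 : ∑ i, a i * x i = ∑ i, ∑ j, ω i j * x j * x i :=
        Finset.sum_congr rfl fun i _ => by rw [← Finset.sum_mul]
      have h2 : ∑ i, ∑ j, ω i j * x j * x i = -∑ i, ∑ j, ω i j * x j * x i := by
        conv_lhs => rw [Finset.sum_comm]
        rw [← Finset.sum_neg_distrib]
        refine Finset.sum_congr rfl fun i _ => ?_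
        rw [← Finset.sum_neg_distrib]
        refine Finset.sum_congr rfl fun j _ => ?_
        rw [hω j i]; ring
      linarith
    rw [← Finset.sum_mul_sum, h0, zero_mul]
  have key : 0 ≤ ∑ i, ∑ j, (s * ω i j - a i * x j + a j * x i) ^ 2 :=
    Finset.sum_nonneg fun i _ => Finset.sum_nonneg fun j _ => sq_nonneg _
  have hexp : ∑ i, ∑ j, (s * ω i j - a i * x j + a j * x i) ^ 2
      = s ^ 2 * (∑ i, ∑ j, ω i j ^ 2) + (∑ i, ∑ j, a i ^ 2 * x j ^ 2)
        + (∑ i, ∑ j, a j ^ 2 * x i ^ 2) - 2 * s * (∑ i, ∑ j, ω i j * x j * a i)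
        + 2 * s * (∑ i, ∑ j, ω i j * x i * a j)
        - 2 * ∑ i, ∑ j, (a i * x i) * (a j * x j) := by
    simp only [Finset.mul_sum, ← Finset.sum_add_distrib, ← Finset.sum_sub_distrib]
    refine Finset.sum_congr rfl fun i _ => Finset.sum_congr rfl fun j _ => ?_
    ring
  rw [hexp, e1, e2, e3, e4, e5] at key
  have h2 : 0 ≤ s * (s * (∑ i, ∑ j, ω i j ^ 2) - 2 * ∑ i, a i ^ 2) := by nlinarith
  have h3 := nonneg_of_mul_nonneg_right h2 hspos
  linarith

/-- A smooth `(-1)`-homogeneous steady Navier–Stokes solution on `ℝⁿ \ {0}` with a smooth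
`(-2)`-homogeneous pressure; `U i` is the `i`-th component of the velocity. -/
structure HomNS {n : ℕ} (U : Fin n → (Fin n → ℝ) → ℝ) (p : (Fin n → ℝ) → ℝ) : Prop where
  smU : ∀ i, Sm n (U i)
  smp : Sm n p
  homU : ∀ l : ℝ, 0 < l → ∀ x : Fin n → ℝ, x ≠ 0 → ∀ i, l * U i (l • x) = U i x
  homp : ∀ l : ℝ, 0 < l → ∀ x : Fin n → ℝ, x ≠ 0 → l ^ 2 * p (l • x) = p x
  ns : ∀ x : Fin n → ℝ, x ≠ 0 → ∀ i,
    -(lap n (U i) x) + (∑ j, U j x * pd n (U i) j x) + pd n p i x = 0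
  div : ∀ x : Fin n → ℝ, x ≠ 0 → ∑ i, pd n (U i) i x = 0

/-- The radial part `F = x · u` of the velocity. -/
def radial {n : ℕ} (U : Fin n → (Fin n → ℝ) → ℝ) (x : Fin n → ℝ) : ℝ := ∑ i, x i * U i x

/-- The total head pressure `H = |u|² / 2 + p`. -/
def head {n : ℕ} (U : Fin n → (Fin n → ℝ) → ℝ) (p : (Fin n → ℝ) → ℝ) (x : Fin n → ℝ) : ℝ :=
  (1 / 2) * (∑ i, U i x * U i x) + p x

/-- Twice the squared vorticity, `∑ᵢⱼ (∂ᵢuⱼ - ∂ⱼuᵢ)²`. -/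
def vortSq {n : ℕ} (U : Fin n → (Fin n → ℝ) → ℝ) (x : Fin n → ℝ) : ℝ :=
  ∑ i, ∑ j, (pd n (U j) i x - pd n (U i) j x) ^ 2

/-- The `0`-homogeneous quantity `|x|² H - F² / 2 + (n - 4) F`, which obeys a maximum principle. -/
def aux {n : ℕ} (U : Fin n → (Fin n → ℝ) → ℝ) (p : (Fin n → ℝ) → ℝ) (x : Fin n → ℝ) : ℝ :=
  nsq n x * head U p x + ((-1 / 2) * (radial U x * radial U x) + ((n : ℝ) - 4) * radial U x)

namespace HomNS

variable {n : ℕ} {U : Fin n → (Fin n → ℝ) → ℝ} {p : (Fin n → ℝ) → ℝ} {x : Fin n → ℝ}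

lemma sm_xU (h : HomNS U p) (i : Fin n) : Sm n (fun x => x i * U i x) :=
  (Sm.coord i).mul (h.smU i)

lemma sm_radial (h : HomNS U p) : Sm n (radial U) := Sm.sum h.sm_xU

lemma sm_energy (h : HomNS U p) : Sm n (fun x => ∑ i, U i x * U i x) :=
  Sm.sum fun i => (h.smU i).mul (h.smU i)

lemma sm_head (h : HomNS U p) : Sm n (head U p) :=
  ((Sm.const _).mul h.sm_energy).add h.smp

lemma sm_aux (h : HomNS U p) : Sm n (aux U p) :=
  ((sm_nsq n).mul h.sm_head).add
    (((Sm.const _).mul (h.sm_radial.mul h.sm_radial)).add ((Sm.const _).mul h.sm_radial))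

lemma hom_radial (h : HomNS U p) (l : ℝ) (hl : 0 < l) (x : Fin n → ℝ) (hx : x ≠ 0) :
    radial U (l • x) = radial U x := by
  refine Finset.sum_congr rfl fun i _ => ?_
  rw [← h.homU l hl x hx i]
  simp; ring

lemma hom_energy (h : HomNS U p) (l : ℝ) (hl : 0 < l) (x : Fin n → ℝ) (hx : x ≠ 0) :
    l ^ 2 * ∑ i, U i (l • x) * U i (l • x) = ∑ i, U i x * U i x := by
  rw [Finset.mul_sum]
  refine Finset.sum_congr rfl fun i _ => ?_
  rw [← h.homU l hl x hx i]
  ring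

lemma hom_head (h : HomNS U p) (l : ℝ) (hl : 0 < l) (x : Fin n → ℝ) (hx : x ≠ 0) :
    l ^ 2 * head U p (l • x) = head U p x := by
  have h1 := h.hom_energy l hl x hx
  have h2 := h.homp l hl x hx
  simp only [head]
  linarith

lemma nsq_smul (l : ℝ) (x : Fin n → ℝ) : nsq n (l • x) = l ^ 2 * nsq n x := by
  simp [nsq, Finset.mul_sum, mul_pow]

lemma hom_aux (h : HomNS U p) (l : ℝ) (hl : 0 < l) (x : Fin n → ℝ) (hx : x ≠ 0) :
    aux U p (l • x) = aux U p x := by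
  simp only [aux, h.hom_radial l hl x hx, nsq_smul, ← h.hom_head l hl x hx]
  ring

lemma euler_U (h : HomNS U p) (hx : x ≠ 0) (i : Fin n) :
    ∑ j, x j * pd n (U i) j x = -U i x := by
  have := euler 1 (h.smU i) hx fun l hl => by rw [pow_one]; exact h.homU l hl x hx i
  simpa using this

lemma euler_radial (h : HomNS U p) (hx : x ≠ 0) : ∑ j, x j * pd n (radial U) j x = 0 := by
  have := euler 0 h.sm_radial hx fun l hl => by
    rw [pow_zero, one_mul]; exact h.hom_radial l hl x hx
  simpa using this

lemma euler_p (h : HomNS U p) (hx : x ≠ 0) : ∑ j, x j * pd n p j x = -2 * p x := by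
  simpa using euler 2 h.smp hx fun l hl => h.homp l hl x hx

lemma euler_head (h : HomNS U p) (hx : x ≠ 0) :
    ∑ j, x j * pd n (head U p) j x = -2 * head U p x := by
  simpa using euler 2 h.sm_head hx fun l hl => h.hom_head l hl x hx

lemma pd_radial (h : HomNS U p) (hx : x ≠ 0) (j : Fin n) :
    pd n (radial U) j x = U j x + ∑ i, x i * pd n (U i) j x := by
  have h1 : pd n (radial U) j x = ∑ i, pd n (fun y => y i * U i y) j x := pd_sum h.sm_xU hx j
  rw [h1]
  simp only [pd_mul (Sm.coord _) (h.smU _) hx, pd_coord, Finset.sum_add_distrib]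
  simp [add_comm]

lemma lap_radial (h : HomNS U p) (hx : x ≠ 0) :
    lap n (radial U) x = ∑ i, x i * lap n (U i) x := by
  have h1 : lap n (radial U) x = ∑ i, lap n (fun y => y i * U i y) x := lap_sum h.sm_xU hx
  rw [h1]
  simp only [lap_mul (Sm.coord _) (h.smU _) hx, lap_coord hx, pd_coord, Finset.sum_add_distrib]
  simp [← Finset.mul_sum, h.div x hx]

/-- The radial component of the equation: `-ΔF + u·∇F = 2H`. -/
lemma radial_eq (h : HomNS U p) (hx : x ≠ 0) :
    ∑ j, U j x * pd n (radial U) j x - lap n (radial U) x = 2 * head U p x := by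
  have h1 : ∑ i, x i * (-(lap n (U i) x) + (∑ j, U j x * pd n (U i) j x) + pd n p i x) = 0 :=
    Finset.sum_eq_zero fun i _ => by rw [h.ns x hx i, mul_zero]
  simp only [mul_add, Finset.sum_add_distrib, h.euler_p hx, mul_neg, Finset.sum_neg_distrib,
    ← h.lap_radial hx] at h1
  have h2 : ∑ j, U j x * pd n (radial U) j x
      = ∑ i, U i x * U i x + ∑ i, x i * ∑ j, U j x * pd n (U i) j x := by
    simp only [h.pd_radial hx, mul_add, Finset.sum_add_distrib, Finset.mul_sum]
    congr 1
    rw [Finset.sum_comm]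
    refine Finset.sum_congr rfl fun i _ => Finset.sum_congr rfl fun j _ => ?_
    ring
  rw [h2, head]
  linarith

/-- The pressure equation, obtained as the divergence of the momentum equation. -/
lemma lap_p (h : HomNS U p) (hx : x ≠ 0) :
    lap n p x = -∑ i, ∑ j, pd n (U j) i x * pd n (U i) j x := by
  have hdiv0 : ∀ j, ∑ i, pd n (pd n (U i) i) j x = 0 := fun j => by
    rw [← pd_sum (fun i => (h.smU i).pd i) hx, pd_congr (g := fun _ => 0) h.div hx j, pd_const]
  have hlapS : ∀ i, Sm n (lap n (U i)) := fun i => Sm.sum fun j => ((h.smU i).pd j).pd j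
  have hconvS : ∀ i, Sm n (fun y => ∑ j, U j y * pd n (U i) j y) := fun i =>
    Sm.sum fun j => (h.smU j).mul ((h.smU i).pd j)
  have h1 : ∀ i, pd n (pd n p i) i x
      = pd n (lap n (U i)) i x - pd n (fun y => ∑ j, U j y * pd n (U i) j y) i x := fun i => by
    rw [← pd_sub (hlapS i) (hconvS i) hx]
    exact pd_congr (fun y hy => by linarith [h.ns y hy i]) hx i
  have h2 : ∑ i, pd n (lap n (U i)) i x = 0 := by
    have h3 : ∀ i, pd n (lap n (U i)) i x = ∑ j, pd n (pd n (pd n (U i) i) j) j x := fun i => by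
      have : pd n (lap n (U i)) i x = ∑ j, pd n (pd n (pd n (U i) j) j) i x :=
        pd_sum (fun j => ((h.smU i).pd j).pd j) hx i
      rw [this]
      refine Finset.sum_congr rfl fun j _ => ?_
      rw [pd_comm ((h.smU i).pd j) hx]
      exact pd_congr (fun y hy => pd_comm (h.smU i) hy j i) hx j
    simp only [h3]
    have h4 : lap n (fun y => ∑ i, pd n (U i) i y) x = 0 := by
      rw [lap_congr (g := fun _ => 0) h.div hx]
      refine Finset.sum_eq_zero fun j _ => ?_
      rw [pd_congr (g := fun _ => 0) (fun y _ => pd_const 0 j) hx j, pd_const]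
    rw [lap_sum (fun i => (h.smU i).pd i) hx] at h4
    exact h4
  have h5 : ∑ i, pd n (fun y => ∑ j, U j y * pd n (U i) j y) i x
      = ∑ i, ∑ j, pd n (U j) i x * pd n (U i) j x := by
    have h6 : ∀ i, pd n (fun y => ∑ j, U j y * pd n (U i) j y) i x
        = ∑ j, U j x * pd n (pd n (U i) i) j x + ∑ j, pd n (U j) i x * pd n (U i) j x := fun i => by
      rw [pd_sum (fun j => (h.smU j).mul ((h.smU i).pd j)) hx, ← Finset.sum_add_distrib]
      refine Finset.sum_congr rfl fun j _ => ?_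
      rw [pd_mul (h.smU j) ((h.smU i).pd j) hx, pd_comm (h.smU i) hx j i]
      ring
    simp only [h6, Finset.sum_add_distrib]
    rw [Finset.sum_comm]
    simp only [← Finset.mul_sum, hdiv0]
    simp
  have h7 : lap n p x = ∑ i, pd n (pd n p i) i x := rfl
  rw [h7]
  simp only [h1, Finset.sum_sub_distrib, h2, h5, zero_sub]

lemma lap_energy (h : HomNS U p) (hx : x ≠ 0) :
    lap n (fun x => ∑ i, U i x * U i x) x
      = 2 * (∑ i, U i x * lap n (U i) x) + 2 * ∑ i, ∑ j, pd n (U i) j x ^ 2 := by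
  rw [lap_sum (fun i => (h.smU i).mul (h.smU i)) hx]
  simp only [lap_mul (h.smU _) (h.smU _) hx, Finset.mul_sum, ← Finset.sum_add_distrib]
  refine Finset.sum_congr rfl fun i _ => ?_
  simp only [sq]
  ring

/-- `ΔH - u·∇H` is the squared vorticity. -/
lemma head_eq (h : HomNS U p) (hx : x ≠ 0) :
    lap n (head U p) x - ∑ j, U j x * pd n (head U p) j x = (1 / 2) * vortSq U x := by
  have h1 : lap n (head U p) x
      = (1 / 2) * lap n (fun x => ∑ i, U i x * U i x) x + lap n p x := by
    have := lap_add ((Sm.const (1 / 2)).mul h.sm_energy) h.smp hx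
    rw [lap_const_mul _ h.sm_energy hx] at this
    exact this
  have h2 : ∀ j, pd n (head U p) j x = ∑ i, U i x * pd n (U i) j x + pd n p j x := fun j => by
    have := pd_add ((Sm.const (1 / 2)).mul h.sm_energy) h.smp hx j
    rw [pd_const_mul _ h.sm_energy hx, pd_sum (fun i => (h.smU i).mul (h.smU i)) hx] at this
    refine this.trans ?_
    congr 1
    rw [Finset.mul_sum]
    refine Finset.sum_congr rfl fun i _ => ?_
    rw [pd_mul (h.smU i) (h.smU i) hx]; ring
  have h3 : ∑ j, U j x * pd n (head U p) j x = ∑ i, U i x * lap n (U i) x := by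
    have h4 : ∑ i, U i x * (-(lap n (U i) x) + (∑ j, U j x * pd n (U i) j x) + pd n p i x) = 0 :=
      Finset.sum_eq_zero fun i _ => by rw [h.ns x hx i, mul_zero]
    simp only [mul_add, Finset.sum_add_distrib, mul_neg, Finset.sum_neg_distrib] at h4
    simp only [h2, mul_add, Finset.sum_add_distrib]
    have h5 : ∑ j, U j x * ∑ i, U i x * pd n (U i) j x
        = ∑ i, U i x * ∑ j, U j x * pd n (U i) j x := by
      simp only [Finset.mul_sum]
      rw [Finset.sum_comm]
      refine Finset.sum_congr rfl fun i _ => Finset.sum_congr rfl fun j _ => ?_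
      ring
    rw [h5]
    linarith
  have h6 : vortSq U x = 2 * (∑ i, ∑ j, pd n (U i) j x ^ 2)
      - 2 * ∑ i, ∑ j, pd n (U j) i x * pd n (U i) j x := by
    have h7 : vortSq U x = (∑ i, ∑ j, pd n (U j) i x ^ 2) + (∑ i, ∑ j, pd n (U i) j x ^ 2)
        - 2 * ∑ i, ∑ j, pd n (U j) i x * pd n (U i) j x := by
      simp only [vortSq, Finset.mul_sum, ← Finset.sum_add_distrib, ← Finset.sum_sub_distrib]
      refine Finset.sum_congr rfl fun i _ => Finset.sum_congr rfl fun j _ => ?_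
      ring
    rw [h7, Finset.sum_comm]
    ring
  rw [h1, h3, h.lap_energy hx, h.lap_p hx, h6]
  ring

/-- The crucial identity: the zeroth-order terms in the equations for `H` and `F` cancel. -/
lemma aux_eq (h : HomNS U p) (hx : x ≠ 0) :
    lap n (aux U p) x - ∑ j, U j x * pd n (aux U p) j x
      = nsq n x * ((1 / 2) * vortSq U x) - ∑ j, pd n (radial U) j x ^ 2 := by
  have hF := h.sm_radial
  have hH := h.sm_head
  have sA := (sm_nsq n).mul hH
  have sB := (Sm.const (n := n) (-1 / 2)).mul (hF.mul hF)
  have sC := (Sm.const (n := n) ((n : ℝ) - 4)).mul hF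
  have h1 : lap n (aux U p) x = (nsq n x * lap n (head U p) x
        + 2 * (∑ j, 2 * x j * pd n (head U p) j x) + head U p x * (2 * n))
      + ((-1 / 2) * (2 * radial U x * lap n (radial U) x + 2 * ∑ j, pd n (radial U) j x ^ 2)
      + ((n : ℝ) - 4) * lap n (radial U) x) := by
    have := lap_add sA (sB.add sC) hx
    rw [lap_add sB sC hx, lap_const_mul _ (hF.mul hF) hx, lap_const_mul _ hF hx, lap_mul hF hF hx,
      lap_mul (sm_nsq n) hH hx, lap_nsq hx] at this
    simp only [pd_nsq hx] at this
    refine this.trans ?_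
    simp only [sq]
    ring
  have h2 : ∀ j, pd n (aux U p) j x = nsq n x * pd n (head U p) j x + head U p x * (2 * x j)
      + (((n : ℝ) - 4) - radial U x) * pd n (radial U) j x := fun j => by
    have := pd_add sA (sB.add sC) hx j
    rw [pd_add sB sC hx, pd_const_mul _ (hF.mul hF) hx, pd_const_mul _ hF hx, pd_mul hF hF hx,
      pd_mul (sm_nsq n) hH hx, pd_nsq hx] at this
    refine this.trans ?_
    ring
  have h3 : ∑ j, U j x * pd n (aux U p) j x
      = nsq n x * (∑ j, U j x * pd n (head U p) j x) + 2 * head U p x * radial U x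
      + (((n : ℝ) - 4) - radial U x) * ∑ j, U j x * pd n (radial U) j x := by
    simp only [h2, radial, Finset.mul_sum, ← Finset.sum_add_distrib]
    refine Finset.sum_congr rfl fun j _ => ?_
    ring
  have h4 : ∑ j, 2 * x j * pd n (head U p) j x = -4 * head U p x := by
    have := h.euler_head hx
    simp only [mul_assoc, ← Finset.mul_sum]
    linarith
  have h5 := h.radial_eq hx
  have h6 := h.head_eq hx
  rw [h1, h3, h4, ← h6]
  linear_combination (-((n : ℝ) - 4 - radial U x)) * h5

/-- `∇F` is the vorticity matrix applied to `x`, so that `antisymm_bound` controls it. -/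
lemma sum_pd_radial_sq_le (h : HomNS U p) (hx : x ≠ 0) :
    ∑ j, pd n (radial U) j x ^ 2 ≤ nsq n x * ((1 / 2) * vortSq U x) := by
  have h1 := antisymm_bound (fun i j => pd n (U j) i x - pd n (U i) j x)
    (fun i j => by ring) x hx
  have h2 : ∀ i, ∑ j, (pd n (U j) i x - pd n (U i) j x) * x j = pd n (radial U) i x := fun i => by
    rw [h.pd_radial hx]
    have := h.euler_U hx i
    simp only [sub_mul, Finset.sum_sub_distrib]
    simp only [mul_comm (x _)] at this ⊢
    linarith
  simp only [h2] at h1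
  simp only [vortSq]
  linarith

end HomNS

/-! ### Rigidity -/

namespace HomNS

variable {n : ℕ} {U : Fin n → (Fin n → ℝ) → ℝ} {p : (Fin n → ℝ) → ℝ} {x : Fin n → ℝ}

lemma isLocalMax_of_forall {f : (Fin n → ℝ) → ℝ} {z : Fin n → ℝ} (hz : z ≠ 0)
    (h : ∀ y, y ≠ 0 → f y ≤ f z) : IsLocalMax f z := by
  filter_upwards [(isOpen_punct n).mem_nhds hz] with y hy using h y hy

/-- By `aux_eq` and `sum_pd_radial_sq_le`, `aux` is a subsolution of `Δ - u·∇`. -/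
lemma exists_aux_const (h : HomNS U p) (hn : 2 ≤ n) : ∃ c, ∀ x, x ≠ 0 → aux U p x = c := by
  obtain ⟨z, hz, hmax⟩ := exists_max_of_homog (by omega) h.sm_aux h.hom_aux
  refine ⟨aux U p z, strong_max hn h.sm_aux (fun x j => U j x) h.smU (fun x hx => ?_) hz hmax⟩
  have h1 := h.aux_eq hx
  have h2 := h.sum_pd_radial_sq_le hx
  linarith

/-- The tangential part of `-|x|² u`. -/
def tan1 (U : Fin n → (Fin n → ℝ) → ℝ) (i : Fin n) (x : Fin n → ℝ) : ℝ :=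
  x i * radial U x - nsq n x * U i x

/-- The tangential part of `|x|² (F u - ∇F)`. -/
def tan2 (U : Fin n → (Fin n → ℝ) → ℝ) (i : Fin n) (x : Fin n → ℝ) : ℝ :=
  nsq n x * (radial U x * U i x - pd n (radial U) i x) - (radial U x * radial U x) * x i

lemma sm_tan1 (h : HomNS U p) (i : Fin n) : Sm n (tan1 U i) :=
  ((Sm.coord i).mul h.sm_radial).sub ((sm_nsq n).mul (h.smU i))

lemma sm_tan2 (h : HomNS U p) (i : Fin n) : Sm n (tan2 U i) :=
  ((sm_nsq n).mul ((h.sm_radial.mul (h.smU i)).sub (h.sm_radial.pd i))).sub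
    ((h.sm_radial.mul h.sm_radial).mul (Sm.coord i))

lemma tan1_tangential (x : Fin n → ℝ) : ∑ i, x i * tan1 U i x = 0 := by
  have : ∑ i, x i * tan1 U i x
      = (∑ i, x i ^ 2) * radial U x - nsq n x * ∑ i, x i * U i x := by
    simp only [tan1, Finset.mul_sum, Finset.sum_mul, ← Finset.sum_sub_distrib]
    exact Finset.sum_congr rfl fun i _ => by ring
  rw [this, nsq, radial]
  ring

lemma tan2_tangential (h : HomNS U p) (hx : x ≠ 0) : ∑ i, x i * tan2 U i x = 0 := by
  have : ∑ i, x i * tan2 U i x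
      = nsq n x * (radial U x * (∑ i, x i * U i x) - ∑ i, x i * pd n (radial U) i x)
        - (radial U x * radial U x) * ∑ i, x i ^ 2 := by
    simp only [tan2, Finset.mul_sum, ← Finset.sum_sub_distrib]
    exact Finset.sum_congr rfl fun i _ => by ring
  rw [this, h.euler_radial hx, ← radial, ← nsq]
  ring

lemma div_tan1 (h : HomNS U p) (hx : x ≠ 0) :
    ∑ i, pd n (tan1 U i) i x = ((n : ℝ) - 2) * radial U x := by
  have h1 : ∀ i, pd n (tan1 U i) i x = x i * pd n (radial U) i x + radial U x
      - (nsq n x * pd n (U i) i x + 2 * (x i * U i x)) := fun i => by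
    have := pd_sub ((Sm.coord i).mul h.sm_radial) ((sm_nsq n).mul (h.smU i)) hx i
    rw [pd_mul (Sm.coord i) h.sm_radial hx, pd_mul (sm_nsq n) (h.smU i) hx, pd_nsq hx,
      pd_coord] at this
    refine this.trans ?_
    simp only [if_true]
    ring
  simp only [h1, Finset.sum_sub_distrib, Finset.sum_add_distrib, ← Finset.mul_sum, h.div x hx,
    h.euler_radial hx]
  rw [← radial]
  simp
  ring

lemma div_tan2 (h : HomNS U p) (hx : x ≠ 0) :
    ∑ i, pd n (tan2 U i) i x
      = (2 - (n : ℝ)) * radial U x ^ 2 + nsq n x * (2 * head U p x) := by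
  have hF := h.sm_radial
  have h1 : ∀ i, pd n (tan2 U i) i x
      = nsq n x * (radial U x * pd n (U i) i x + U i x * pd n (radial U) i x
          - pd n (pd n (radial U) i) i x)
        + 2 * (radial U x * (x i * U i x) - x i * pd n (radial U) i x)
        - (radial U x ^ 2 + 2 * (radial U x * (x i * pd n (radial U) i x))) := fun i => by
    have := pd_sub ((sm_nsq n).mul ((hF.mul (h.smU i)).sub (hF.pd i)))
      ((hF.mul hF).mul (Sm.coord i)) hx i
    rw [pd_mul (sm_nsq n) ((hF.mul (h.smU i)).sub (hF.pd i)) hx,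
      pd_sub (hF.mul (h.smU i)) (hF.pd i) hx, pd_mul hF (h.smU i) hx,
      pd_mul (hF.mul hF) (Sm.coord i) hx, pd_mul hF hF hx, pd_nsq hx, pd_coord] at this
    refine this.trans ?_
    simp only [if_true]
    ring
  have h2 : ∑ i, pd n (pd n (radial U) i) i x = lap n (radial U) x := rfl
  have h3 := h.radial_eq hx
  simp only [h1, Finset.sum_sub_distrib, Finset.sum_add_distrib, ← Finset.mul_sum, h.div x hx,
    h.euler_radial hx, h2]
  rw [← radial, ← h3]
  simp
  ring

/-- The constant value of `aux` is nonnegative: up to a multiple of `div tan1`, the divergence of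
`tan2` is `2c - (n - 3) F²`. -/
lemma aux_const_nonneg (h : HomNS U p) (hn : 4 ≤ n) {c : ℝ}
    (hc : ∀ x, x ≠ 0 → aux U p x = c) : 0 ≤ c := by
  by_contra! hneg
  have hn' : (4 : ℝ) ≤ n := by exact_mod_cast hn
  set k : ℝ := 2 * ((n : ℝ) - 4) / ((n : ℝ) - 2) with hk
  have hk' : k * ((n : ℝ) - 2) = 2 * ((n : ℝ) - 4) := by
    rw [hk]; field_simp [show (n : ℝ) - 2 ≠ 0 by linarith]
  have hS : ∀ i, Sm n fun x => (-1) * tan2 U i x + (-k) * tan1 U i x := fun i =>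
    ((Sm.const (-1)).mul (h.sm_tan2 i)).add ((Sm.const (-k)).mul (h.sm_tan1 i))
  have hdiv : ∀ x, x ≠ 0 → ∑ i, pd n (fun x => (-1) * tan2 U i x + (-k) * tan1 U i x) i x
      = ((n : ℝ) - 3) * radial U x ^ 2 - 2 * c := by
    intro x hx
    have h1 : ∀ i, pd n (fun x => (-1) * tan2 U i x + (-k) * tan1 U i x) i x
        = (-1) * pd n (tan2 U i) i x + (-k) * pd n (tan1 U i) i x := fun i => by
      rw [pd_add ((Sm.const (-1)).mul (h.sm_tan2 i)) ((Sm.const (-k)).mul (h.sm_tan1 i)) hx,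
        pd_const_mul _ (h.sm_tan2 i) hx, pd_const_mul _ (h.sm_tan1 i) hx]
    simp only [h1, Finset.sum_add_distrib, ← Finset.mul_sum]
    rw [h.div_tan1 hx, h.div_tan2 hx]
    have h2 := hc x hx
    rw [aux] at h2
    linear_combination (-2) * h2 - radial U x * hk'
  have hpos : ∀ x, x ≠ 0 →
      0 < ∑ i, pd n (fun x => (-1) * tan2 U i x + (-k) * tan1 U i x) i x := by
    intro x hx
    rw [hdiv x hx]
    have := mul_nonneg (show (0 : ℝ) ≤ (n : ℝ) - 3 by linarith) (sq_nonneg (radial U x))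
    linarith
  have hx₁ : (fun _ => 1 : Fin n → ℝ) ≠ 0 := fun h0 => by
    have := congrFun h0 ⟨0, by omega⟩
    simp at this
  have hzero := div_eq_zero_of_tangential hS (fun x hx => by
    have h1 : ∑ i, x i * ((-1) * tan2 U i x + (-k) * tan1 U i x)
        = (-1) * (∑ i, x i * tan2 U i x) + (-k) * ∑ i, x i * tan1 U i x := by
      simp only [Finset.mul_sum, ← Finset.sum_add_distrib]
      exact Finset.sum_congr rfl fun i _ => by ring
    rw [h1, h.tan2_tangential hx, tan1_tangential]
    ring) (fun x hx => (hpos x hx).le) _ hx₁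
  exact (hpos _ hx₁).ne' hzero

/-- At a negative minimum of `F`, the equation `ΔF - u·∇F = -2H` would force `H ≤ 0` there, while
`|x|² H = c + F² / 2 - (n - 4) F` is positive. -/
lemma radial_nonneg (h : HomNS U p) (hn : 4 ≤ n) (x : Fin n → ℝ) (hx : x ≠ 0) :
    0 ≤ radial U x := by
  obtain ⟨c, hc⟩ := h.exists_aux_const (by omega)
  have hc0 := h.aux_const_nonneg hn hc
  have hn' : (4 : ℝ) ≤ n := by exact_mod_cast hn
  have hS : Sm n fun x => (-1) * radial U x := (Sm.const (-1)).mul h.sm_radial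
  obtain ⟨z, hz, hmax⟩ := exists_max_of_homog (by omega) hS
    (fun l hl x hx => by rw [h.hom_radial l hl x hx])
  have hloc := isLocalMax_of_forall hz hmax
  have h1 := lap_nonpos_of_isLocalMax hS hz hloc
  rw [lap_const_mul _ h.sm_radial hz] at h1
  have h2 : ∀ j, pd n (radial U) j z = 0 := fun j => by
    have := pd_eq_zero_of_isLocalMax hloc j
    rw [pd_const_mul _ h.sm_radial hz] at this
    linarith
  have h3 := h.radial_eq hz
  simp only [h2, mul_zero, Finset.sum_const_zero] at h3
  have h4 := hc z hz
  rw [aux] at h4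
  have h5 : head U p z ≤ 0 := by linarith
  have h6 := mul_nonpos_of_nonneg_of_nonpos (nsq_nonneg n z) h5
  have hz0 : 0 ≤ radial U z := by
    by_contra! hlt
    have h7 := mul_nonneg (show (0 : ℝ) ≤ (n : ℝ) - 4 by linarith) (neg_nonneg.mpr hlt.le)
    nlinarith [mul_pos (neg_pos.mpr hlt) (neg_pos.mpr hlt)]
  have := hmax x hx
  linarith

/-- By `radial_nonneg`, the tangential field `tan1` has nonnegative divergence `(n - 2) F`. -/
lemma radial_eq_zero (h : HomNS U p) (hn : 4 ≤ n) (x : Fin n → ℝ) (hx : x ≠ 0) :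
    radial U x = 0 := by
  have hn' : (4 : ℝ) ≤ n := by exact_mod_cast hn
  have h1 := div_eq_zero_of_tangential h.sm_tan1 (fun x _ => tan1_tangential x)
    (fun x hx => by
      rw [h.div_tan1 hx]
      exact mul_nonneg (by linarith) (h.radial_nonneg hn x hx)) x hx
  rw [h.div_tan1 hx] at h1
  exact (mul_eq_zero.mp h1).resolve_left (by linarith)

/-- With `F = 0` and `aux` constant, the vorticity vanishes. -/
lemma pd_symm (h : HomNS U p) (hn : 4 ≤ n) (x : Fin n → ℝ) (hx : x ≠ 0) (i j : Fin n) :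
    pd n (U j) i x = pd n (U i) j x := by
  obtain ⟨c, hc⟩ := h.exists_aux_const (by omega)
  have hp : ∀ j, ∀ y, y ≠ 0 → pd n (aux U p) j y = 0 := fun j y hy => by
    rw [pd_congr (g := fun _ => c) hc hy, pd_const]
  have hl : lap n (aux U p) x = 0 :=
    Finset.sum_eq_zero fun j _ => by rw [pd_congr (g := fun _ => 0) (hp j) hx, pd_const]
  have hF : ∀ j, pd n (radial U) j x = 0 := fun j => by
    rw [pd_congr (g := fun _ => 0) (h.radial_eq_zero hn) hx, pd_const]
  have h1 := h.aux_eq hx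
  simp only [hl, hp _ x hx, hF, mul_zero, Finset.sum_const_zero, sub_zero] at h1
  have h2 : vortSq U x = 0 := by
    rw [zero_pow two_ne_zero, Finset.sum_const_zero, sub_zero] at h1
    rcases mul_eq_zero.mp h1.symm with h3 | h3
    · exact absurd h3 (nsq_pos hx).ne'
    · linarith
  rw [vortSq, Finset.sum_eq_zero_iff_of_nonneg
    fun i _ => Finset.sum_nonneg fun j _ => sq_nonneg _] at h2
  have h3 := h2 i (Finset.mem_univ i)
  rw [Finset.sum_eq_zero_iff_of_nonneg fun j _ => sq_nonneg _] at h3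
  have h4 := h3 j (Finset.mem_univ j)
  exact sub_eq_zero.mp (pow_eq_zero_iff two_ne_zero |>.mp h4)

/-- A curl-free and divergence-free field is harmonic. -/
lemma lap_U (h : HomNS U p) (hn : 4 ≤ n) (x : Fin n → ℝ) (hx : x ≠ 0) (i : Fin n) :
    lap n (U i) x = 0 := by
  have h1 : ∀ j, pd n (pd n (U i) j) j x = pd n (pd n (U j) j) i x := fun j => by
    rw [pd_congr (g := pd n (U j) i) (fun y hy => (h.pd_symm hn y hy i j).symm) hx j,
      pd_comm (h.smU j) hx]
  rw [lap, Finset.sum_congr rfl fun j _ => h1 j, ← pd_sum (fun j => (h.smU j).pd j) hx,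
    pd_congr (g := fun _ => 0) h.div hx i, pd_const]

/-- The components of `u` being harmonic, `Δ(|x|²|u|²) ≥ (2n - 6) |u|²`, so that `|x|²|u|²` has
maximum zero. -/
theorem eq_zero (h : HomNS U p) (hn : 4 ≤ n) (x : Fin n → ℝ) (hx : x ≠ 0) (i : Fin n) :
    U i x = 0 := by
  have hn' : (4 : ℝ) ≤ n := by exact_mod_cast hn
  set q : (Fin n → ℝ) → ℝ := fun x => ∑ i, U i x * U i x with hq
  have hqS : Sm n q := h.sm_energy
  have hq0 : ∀ y, 0 ≤ q y := fun y => Finset.sum_nonneg fun i _ => mul_self_nonneg _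
  have hVS : Sm n fun x => nsq n x * q x := (sm_nsq n).mul hqS
  obtain ⟨z, hz, hmax⟩ := exists_max_of_homog (by omega) hVS (fun l hl x hx => by
    have e : l ^ 2 * q (l • x) = q x := h.hom_energy l hl x hx
    rw [nsq_smul, ← e]
    ring)
  have h1 := lap_nonpos_of_isLocalMax hVS hz (isLocalMax_of_forall hz hmax)
  have h2 : ∑ j, z j * pd n q j z = -2 * q z := by
    simpa using euler 2 hqS hz fun l hl => h.hom_energy l hl z hz
  have h3 : ∑ j, pd n (nsq n) j z * pd n q j z = -4 * q z := by
    simp only [pd_nsq hz, mul_assoc, ← Finset.mul_sum, h2]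
    ring
  have h4 : q z ≤ nsq n z * ∑ i, ∑ j, pd n (U i) j z ^ 2 := by
    rw [hq, Finset.mul_sum]
    refine Finset.sum_le_sum fun i _ => ?_
    have h5 := Finset.sum_mul_sq_le_sq_mul_sq Finset.univ z fun j => pd n (U i) j z
    rw [h.euler_U hz i] at h5
    rw [nsq]
    linarith
  have h6 : lap n q z = 2 * ∑ i, ∑ j, pd n (U i) j z ^ 2 := by
    rw [hq, h.lap_energy hz]
    simp [h.lap_U hn z hz]
  rw [lap_mul (sm_nsq n) hqS hz, h3, lap_nsq hz, h6] at h1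
  have h7 : q z = 0 := by nlinarith [hq0 z]
  have h8 := hmax x hx
  rw [h7, mul_zero] at h8
  have h9 : q x = 0 := by nlinarith [hq0 x, nsq_pos hx]
  have h10 := (Finset.sum_eq_zero_iff_of_nonneg fun i _ => mul_self_nonneg (U i x)).mp h9 i
    (Finset.mem_univ i)
  exact mul_self_eq_zero.mp h10

end HomNS

theorem no_homogeneous_solutions_dim_ge_four
    (n : ℕ) (hn : 4 ≤ n)
    (u : (Fin n → ℝ) → Fin n → ℝ) (p : (Fin n → ℝ) → ℝ)
    (hu : ContDiffOn ℝ (⊤ : ℕ∞) u {x | x ≠ 0})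
    (hp : ContDiffOn ℝ (⊤ : ℕ∞) p {x | x ≠ 0})
    (huhom : ∀ l : ℝ, 0 < l → ∀ x : Fin n → ℝ, x ≠ 0 → l • u (l • x) = u x)
    (hphom : ∀ l : ℝ, 0 < l → ∀ x : Fin n → ℝ, x ≠ 0 → l ^ 2 * p (l • x) = p x)
    (hNS : ∀ x : Fin n → ℝ, x ≠ 0 → ∀ i : Fin n,
      -(lap n (fun y => u y i) x) + (∑ j, u x j * pd n (fun y => u y i) j x)
        + pd n p i x = 0)
    (hdiv : ∀ x : Fin n → ℝ, x ≠ 0 → ∑ i, pd n (fun y => u y i) i x = 0) :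
    ∀ x : Fin n → ℝ, x ≠ 0 → u x = 0 := by
  have h : HomNS (fun i y => u y i) p :=
    { smU := fun i => contDiffOn_pi.mp hu i
      smp := hp
      homU := fun l hl x hx i => congrFun (huhom l hl x hx) i
      homp := hphom
      ns := hNS
      div := hdiv }
  exact fun x hx => funext fun i => h.eq_zero hn x hx i
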